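/- arXiv:2307.16099 — 6 statements merged into one kernel-verified Lean document; each statement's English description precedes it below -/
import Mathlib

section
/- Let D ≥ 1 be an integer, γ > 0, and let S be a nonempty subset of [0,1]^D. Let C ⊆ ℝ^D be a finite γ-cover of [0,1]^D (in ℓ∞) of minimal cardinality, i.e. card(C) = N(γ, [0,1]^D), and let C_∂ = {c ∈ C : the closed ℓ∞-ball of radius γ around c intersects S}. Then N(γ, S) ≤ card(C_∂) ≤ 2^D · 4^D · N(γ/2, S). -/
/-- The covering number `N(r, U)`: the minimal cardinality of a finite `r`-cover of `U`
in the ℓ∞ (sup) norm on `ℝ^D` (here `Fin D → ℝ` carries the sup norm). -/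
noncomputable def coveringNumber (D : ℕ) (r : ℝ) (U : Set (Fin D → ℝ)) : ℕ :=
  sInf {n : ℕ | ∃ T : Finset (Fin D → ℝ), T.card = n ∧ U ⊆ ⋃ t ∈ T, {x | ‖x - t‖ ≤ r}}

/-- Finite grid of `3^D` points around `t`. -/
noncomputable def gridPts (D : ℕ) (γ : ℝ) (t : Fin D → ℝ) : Finset (Fin D → ℝ) := by
  classical
  exact (Finset.univ : Finset (Fin D → Fin 3)).image
    (fun f i => t i + (((f i : ℕ) : ℝ) - 1) * (2 * γ))

theorem gridPts_card (D : ℕ) (γ : ℝ) (t : Fin D → ℝ) : (gridPts D γ t).card ≤ 3 ^ D := by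
  classical
  unfold gridPts
  refine Finset.card_image_le.trans ?_
  simp

theorem gridPts_cover (D : ℕ) (γ : ℝ) (hγ : 0 < γ) (t x : Fin D → ℝ)
    (h : ‖x - t‖ ≤ 3 * γ) : ∃ c ∈ gridPts D γ t, ‖x - c‖ ≤ γ := by
  classical
  have key : ∀ i, ∃ k : Fin 3, |x i - (t i + (((k : ℕ) : ℝ) - 1) * (2 * γ))| ≤ γ := by
    intro i
    have hi : |x i - t i| ≤ 3 * γ := (norm_le_pi_norm (x - t) i).trans h
    rw [abs_le] at hi
    by_cases h1 : x i - t i ≤ -γ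
    · refine ⟨0, ?_⟩
      rw [abs_le]
      constructor <;> norm_num <;> linarith
    · by_cases h2 : x i - t i ≤ γ
      · refine ⟨1, ?_⟩
        rw [abs_le]
        constructor <;> norm_num <;> linarith
      · refine ⟨2, ?_⟩
        rw [abs_le]
        constructor <;> norm_num <;> linarith
  choose f hf using key
  refine ⟨fun i => t i + (((f i : ℕ) : ℝ) - 1) * (2 * γ), ?_, ?_⟩
  · unfold gridPts
    exact Finset.mem_image_of_mem _ (Finset.mem_univ f)
  · rw [pi_norm_le_iff_of_nonneg hγ.le]
    exact hf

/-- If `C` is a minimal finite `γ`-cover of `[0,1]^D` in ℓ∞ and `C_∂` is the set of centers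
`c ∈ C` whose closed ℓ∞-ball of radius `γ` meets the nonempty set `S ⊆ [0,1]^D`, then
`N(γ, S) ≤ card C_∂ ≤ 2^D · 4^D · N(γ/2, S)`. -/
theorem boundary_cubes_card_bound
    (D : ℕ) (hD : 1 ≤ D) (γ : ℝ) (hγ : 0 < γ)
    (S : Set (Fin D → ℝ)) (hS : S.Nonempty) (hSsub : S ⊆ Set.Icc 0 1)
    (C : Finset (Fin D → ℝ))
    (hCcov : Set.Icc (0 : Fin D → ℝ) 1 ⊆ ⋃ c ∈ C, {x | ‖x - c‖ ≤ γ})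
    (hCmin : C.card = coveringNumber D γ (Set.Icc 0 1))
    (Cb : Set (Fin D → ℝ))
    (hCb : Cb = {c ∈ (C : Set (Fin D → ℝ)) | ({x | ‖x - c‖ ≤ γ} ∩ S).Nonempty}) :
    coveringNumber D γ S ≤ Cb.ncard ∧
      Cb.ncard ≤ 2 ^ D * 4 ^ D * coveringNumber D (γ / 2) S := by
  classical
  have hle : ∀ (r : ℝ) (U : Set (Fin D → ℝ)) (T : Finset (Fin D → ℝ)),
      U ⊆ ⋃ t ∈ T, {x | ‖x - t‖ ≤ r} → coveringNumber D r U ≤ T.card :=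
    fun r U T h => Nat.sInf_le ⟨T, rfl, h⟩
  set B : Finset (Fin D → ℝ) :=
    C.filter (fun c => ({x | ‖x - c‖ ≤ γ} ∩ S).Nonempty) with hB
  have hCbB : Cb = (B : Set (Fin D → ℝ)) := by
    rw [hCb, hB]; ext c; simp
  rw [hCbB, Set.ncard_coe_finset]
  constructor
  · apply hle
    intro x hx
    have h := hCcov (hSsub hx)
    simp only [Set.mem_iUnion, Set.mem_setOf_eq, exists_prop] at h ⊢
    obtain ⟨c, hc, hxc⟩ := h
    exact ⟨c, Finset.mem_filter.2 ⟨hc, x, hxc, hx⟩, hxc⟩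
  · have hne : {n : ℕ | ∃ T : Finset (Fin D → ℝ), T.card = n ∧
        S ⊆ ⋃ t ∈ T, {x | ‖x - t‖ ≤ γ / 2}}.Nonempty := by
      obtain ⟨T, -, hTf, hT⟩ := (isCompact_Icc (a := (0 : Fin D → ℝ)) (b := 1)).finite_cover_balls
        (half_pos hγ)
      refine ⟨_, hTf.toFinset, rfl, ?_⟩
      intro x hx
      have h := hT (hSsub hx)
      simp only [Set.mem_iUnion, exists_prop, Metric.mem_ball, dist_eq_norm] at h
      obtain ⟨t, ht, hxt⟩ := h
      simp only [Set.mem_iUnion, Set.mem_setOf_eq, exists_prop, Set.Finite.mem_toFinset]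
      exact ⟨t, ht, hxt.le⟩
    obtain ⟨T, hTc, hT⟩ := Nat.sInf_mem hne
    change T.card = coveringNumber D (γ / 2) S at hTc
    rw [← hTc]
    have hcov : Set.Icc (0 : Fin D → ℝ) 1 ⊆
        ⋃ c ∈ (C \ B) ∪ T.biUnion (gridPts D γ), {x | ‖x - c‖ ≤ γ} := by
      intro x hx
      have h := hCcov hx
      simp only [Set.mem_iUnion, Set.mem_setOf_eq, exists_prop] at h ⊢
      obtain ⟨c, hc, hxc⟩ := h
      by_cases hcB : c ∈ B
      · obtain ⟨-, y, hyc, hyS⟩ := Finset.mem_filter.1 hcB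
        have h2 := hT hyS
        simp only [Set.mem_iUnion, Set.mem_setOf_eq, exists_prop] at h2 hyc
        obtain ⟨t, ht, hyt⟩ := h2
        have h3 : ‖x - t‖ ≤ 3 * γ := by
          have e : x - t = (x - c) - (y - c) + (y - t) := by abel
          rw [e]
          have := norm_add_le ((x - c) - (y - c)) (y - t)
          have := norm_sub_le (x - c) (y - c)
          linarith
        obtain ⟨g, hg, hxg⟩ := gridPts_cover D γ hγ t x h3
        exact ⟨g, Finset.mem_union_right _ (Finset.mem_biUnion.2 ⟨t, ht, hg⟩), hxg⟩
      · exact ⟨c, Finset.mem_union_left _ (Finset.mem_sdiff.2 ⟨hc, hcB⟩), hxc⟩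
    have h1 := hle _ _ _ hcov
    rw [← hCmin] at h1
    have h2 := Finset.card_union_le (C \ B) (T.biUnion (gridPts D γ))
    have h3 : (T.biUnion (gridPts D γ)).card ≤ T.card * 3 ^ D :=
      Finset.card_biUnion_le_card_mul _ _ _ (fun t _ => gridPts_card D γ t)
    have h4 : (C \ B).card + B.card = C.card :=
      Finset.card_sdiff_add_card_eq_card (Finset.filter_subset _ _)
    have h5 : 3 ^ D ≤ 2 ^ D * 4 ^ D := by
      rw [← mul_pow]
      exact Nat.pow_le_pow_left (by norm_num) D
    have h6 : T.card * 3 ^ D ≤ 2 ^ D * 4 ^ D * T.card := by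
      rw [mul_comm]
      exact Nat.mul_le_mul_right _ h5
    omega
end

section
/- Let D ≥ 1 be an integer, γ > 0, K > 0, and let S be a nonempty subset of [0,1]^D satisfying N(γ/2, S) ≤ K · γ^{-(D-1)}. Let C ⊆ ℝ^D be a finite γ-cover of [0,1]^D (in ℓ∞) of minimal cardinality, i.e. card(C) = N(γ, [0,1]^D), and let C_∂ = {c ∈ C : the closed ℓ∞-ball of radius γ around c intersects S}. Then the Lebesgue measure of ⋃_{c ∈ C_∂} {x : ‖x−c‖∞ ≤ γ} is at most 16^D · K · γ. -/
/-- If `S ⊆ [0,1]^D` is nonempty with `N(γ/2, S) ≤ K · γ^{-(D-1)}`, `C` is a minimal finite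
`γ`-cover of `[0,1]^D` in ℓ∞, and `C_∂` is the set of centers `c ∈ C` whose closed ℓ∞-ball of
radius `γ` meets `S`, then the Lebesgue measure of the union of those balls is at most
`16^D · K · γ`. -/
theorem boundary_cubes_volume_bound
    (D : ℕ) (hD : 1 ≤ D) (γ K : ℝ) (hγ : 0 < γ) (hK : 0 < K)
    (S : Set (Fin D → ℝ)) (hS : S.Nonempty) (hSsub : S ⊆ Set.Icc 0 1)
    (hcov : (coveringNumber D (γ / 2) S : ℝ) ≤ K / γ ^ (D - 1))
    (C : Finset (Fin D → ℝ))
    (hCcov : Set.Icc (0 : Fin D → ℝ) 1 ⊆ ⋃ c ∈ C, {x | ‖x - c‖ ≤ γ})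
    (hCmin : C.card = coveringNumber D γ (Set.Icc 0 1))
    (Cb : Set (Fin D → ℝ))
    (hCb : Cb = {c ∈ (C : Set (Fin D → ℝ)) | ({x | ‖x - c‖ ≤ γ} ∩ S).Nonempty}) :
    MeasureTheory.volume (⋃ c ∈ Cb, {x | ‖x - c‖ ≤ γ}) ≤
      ENNReal.ofReal (16 ^ D * K * γ) := by
  classical
  have hne : {n : ℕ | ∃ T : Finset (Fin D → ℝ), T.card = n ∧
      S ⊆ ⋃ t ∈ T, {x | ‖x - t‖ ≤ γ / 2}}.Nonempty := by
    have hc : IsCompact (Set.Icc (0 : Fin D → ℝ) 1) := isCompact_Icc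
    obtain ⟨t, ht, hcv⟩ := Metric.totallyBounded_iff.1 hc.totallyBounded (γ / 2) (by positivity)
    refine ⟨_, ht.toFinset, rfl, fun x hx => ?_⟩
    have h := hcv (hSsub hx)
    simp only [Set.mem_iUnion, Metric.mem_ball, dist_eq_norm, exists_prop] at h
    obtain ⟨y, hy, hxy⟩ := h
    simp only [Set.mem_iUnion, Set.mem_setOf_eq, exists_prop]
    exact ⟨y, ht.mem_toFinset.2 hy, hxy.le⟩
  obtain ⟨T, hT, hST⟩ := Nat.sInf_mem hne
  change T.card = coveringNumber D (γ / 2) S at hT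
  have hsub : (⋃ c ∈ Cb, {x | ‖x - c‖ ≤ γ}) ⊆ ⋃ t ∈ T, Metric.closedBall t (5 / 2 * γ) := by
    intro x hx
    simp only [Set.mem_iUnion, Set.mem_setOf_eq, exists_prop, hCb] at hx
    obtain ⟨c, ⟨-, s, hsc, hs⟩, hxc⟩ := hx
    have h := hST hs
    simp only [Set.mem_iUnion, Set.mem_setOf_eq, exists_prop] at h hsc
    obtain ⟨t, ht, hst⟩ := h
    simp only [Set.mem_iUnion, Metric.mem_closedBall, exists_prop]
    refine ⟨t, ht, ?_⟩
    rw [← dist_eq_norm] at hxc hsc hst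
    have h1 := dist_triangle x c t
    have h2 := dist_triangle c s t
    rw [dist_comm c s] at h2
    linarith
  have hγD : γ ^ D = γ ^ (D - 1) * γ := by
    rw [← pow_succ, Nat.sub_add_cancel hD]
  calc MeasureTheory.volume (⋃ c ∈ Cb, {x | ‖x - c‖ ≤ γ})
      ≤ MeasureTheory.volume (⋃ t ∈ T, Metric.closedBall t (5 / 2 * γ)) :=
        MeasureTheory.measure_mono hsub
    _ ≤ ∑ t ∈ T, MeasureTheory.volume (Metric.closedBall t (5 / 2 * γ)) :=
        MeasureTheory.measure_biUnion_finset_le _ _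
    _ = ENNReal.ofReal (T.card * (5 * γ) ^ D) := by
        rw [Finset.sum_congr rfl (fun t _ => Real.volume_pi_closedBall t (by positivity))]
        rw [Finset.sum_const, nsmul_eq_mul, ENNReal.ofReal_mul (by positivity),
          ENNReal.ofReal_natCast, Fintype.card_fin]
        congr 3
        ring
    _ ≤ ENNReal.ofReal (16 ^ D * K * γ) := by
        apply ENNReal.ofReal_le_ofReal
        rw [hT]
        calc (coveringNumber D (γ / 2) S : ℝ) * (5 * γ) ^ D
            ≤ K / γ ^ (D - 1) * (5 * γ) ^ D := by gcongr
          _ = 5 ^ D * K * γ := by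
            rw [mul_pow, hγD]
            field_simp
          _ ≤ 16 ^ D * K * γ := by gcongr; norm_num
end

section
/- Let D ≥ 1, β, x ∈ ℝ^D, y ∈ ℝ, and δ ≥ 0. Then sup_{λ ∈ ℝ^D, ‖λ‖∞ ≤ δ} (y − β·(x+λ))² = (|y − β·x| + δ‖β‖₁)². -/
/-- For the multivariate linear-regression squared loss, the supremum of `(y - β·(x+λ))²`
over the ℓ∞ ball `‖λ‖∞ ≤ δ` equals `(|y - β·x| + δ‖β‖₁)²`.
Here `Fin D → ℝ` carries the sup (ℓ∞) norm and `∑ i, |β i|` is the ℓ1 norm of `β`. -/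
theorem linreg_best_pointwise_attack_multivariate
    (D : ℕ) (hD : 1 ≤ D) (β x : Fin D → ℝ) (y δ : ℝ) (hδ : 0 ≤ δ) :
    sSup ((fun l : Fin D → ℝ => (y - ∑ i, β i * (x i + l i)) ^ 2) '' {l | ‖l‖ ≤ δ})
      = (|y - ∑ i, β i * x i| + δ * ∑ i, |β i|) ^ 2 := by
  have key : ∀ l : Fin D → ℝ, y - ∑ i, β i * (x i + l i)
      = (y - ∑ i, β i * x i) - ∑ i, β i * l i := by
    intro l
    simp only [mul_add, Finset.sum_add_distrib]
    ring
  simp only [key]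
  generalize y - ∑ i, β i * x i = r
  have hB : 0 ≤ ∑ i, |β i| := Finset.sum_nonneg fun i _ => abs_nonneg _
  apply IsGreatest.csSup_eq
  constructor
  · obtain ⟨s, hs, hr⟩ : ∃ s : ℝ, |s| = 1 ∧ |r| = s * r := by
      rcases le_total 0 r with h | h
      · exact ⟨1, by simp, by simp [abs_of_nonneg h]⟩
      · exact ⟨-1, by simp, by simp [abs_of_nonpos h]⟩
    have hs2 : s ^ 2 = 1 := by rw [← sq_abs, hs]; norm_num
    refine ⟨fun i => -(s * δ) * (if 0 ≤ β i then 1 else -1), ?_, ?_⟩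
    · rw [Set.mem_setOf_eq, pi_norm_le_iff_of_nonneg hδ]
      intro i
      rw [Real.norm_eq_abs, abs_mul, abs_neg, abs_mul, hs, abs_of_nonneg hδ]
      split_ifs <;> simp
    · have h : ∑ i, β i * (-(s * δ) * (if 0 ≤ β i then (1:ℝ) else -1))
          = -(s * δ) * ∑ i, |β i| := by
        rw [Finset.mul_sum]
        refine Finset.sum_congr rfl fun i _ => ?_
        split_ifs with h
        · rw [abs_of_nonneg h]; ring
        · rw [abs_of_neg (not_le.mp h)]; ring
      simp only [h, hr]
      generalize ∑ i, |β i| = B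
      linear_combination (δ ^ 2 * B ^ 2 - r ^ 2) * hs2
  · rintro _ ⟨l, hl, rfl⟩
    rw [Set.mem_setOf_eq, pi_norm_le_iff_of_nonneg hδ] at hl
    have h : |∑ i, β i * l i| ≤ δ * ∑ i, |β i| := by
      refine (Finset.abs_sum_le_sum_abs _ _).trans ?_
      rw [Finset.mul_sum]
      refine Finset.sum_le_sum fun i _ => ?_
      rw [abs_mul, mul_comm]
      exact mul_le_mul_of_nonneg_right (hl i) (abs_nonneg _)
    apply sq_le_sq'
    · have := abs_le.mp h
      have := neg_abs_le r
      linarith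
    · have := abs_le.mp h
      have := le_abs_self r
      linarith
end

section
/- Let D ≥ 1, β, x ∈ ℝ^D, y ∈ ℝ, δ ≥ 0, and assume β·x ≠ y. Define λ* ∈ ℝ^D componentwise by λ*_i = δ · sign(β·x − y) · sign(β_i); equivalently, λ* equals δ times the componentwise sign of the gradient ∇_x (y − β·x)² = 2(β·x − y)β. Then ‖λ*‖∞ ≤ δ and (y − β·(x+λ*))² = (|y − β·x| + δ‖β‖₁)² = sup_{‖λ‖∞ ≤ δ} (y − β·(x+λ))²; that is, the FGSM perturbation δ·sign(∇_x L) is an exact maximizer of the squared loss over the ℓ∞ ball of radius δ. -/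
theorem aux_sign_mul (a b : ℝ) : Real.sign (2 * a * b) = Real.sign a * Real.sign b := by
  rcases lt_trichotomy a 0 with ha | ha | ha <;> rcases lt_trichotomy b 0 with hb | hb | hb
  · rw [Real.sign_of_neg ha, Real.sign_of_neg hb, Real.sign_of_pos (by nlinarith)]; norm_num
  · simp [hb]
  · rw [Real.sign_of_neg ha, Real.sign_of_pos hb, Real.sign_of_neg (by nlinarith)]; norm_num
  · simp [ha]
  · simp [ha]
  · simp [ha]
  · rw [Real.sign_of_pos ha, Real.sign_of_neg hb, Real.sign_of_neg (by nlinarith)]; norm_num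
  · simp [hb]
  · rw [Real.sign_of_pos ha, Real.sign_of_pos hb, Real.sign_of_pos (by positivity)]; norm_num

theorem aux_abs_sign_le (a : ℝ) : |Real.sign a| ≤ 1 := by
  rcases Real.sign_apply_eq a with h | h | h <;> rw [h] <;> norm_num

theorem aux_mul_sign (a : ℝ) : a * Real.sign a = |a| := by
  rcases lt_trichotomy a 0 with ha | ha | ha
  · rw [Real.sign_of_neg ha, abs_of_neg ha]; ring
  · simp [ha]
  · rw [Real.sign_of_pos ha, abs_of_pos ha]; ring

/-- FGSM is exact for multivariate linear regression: if `β·x ≠ y`, the perturbation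
`λ*_i = δ · sign(β·x - y) · sign(β_i)` (which equals `δ` times the componentwise sign of the
gradient `∇_x (y - β·x)² = 2(β·x - y)β`) lies in the ℓ∞ ball of radius `δ` and attains the
supremum `(|y - β·x| + δ‖β‖₁)²` of the squared loss over that ball.
Here `Fin D → ℝ` carries the sup (ℓ∞) norm. -/
theorem fgsm_exact_linreg
    (D : ℕ) (hD : 1 ≤ D) (β x : Fin D → ℝ) (y δ : ℝ) (hδ : 0 ≤ δ)
    (hne : (∑ i, β i * x i) ≠ y)
    (lstar : Fin D → ℝ)
    (hl : lstar = fun i => δ * Real.sign ((∑ j, β j * x j) - y) * Real.sign (β i)) :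
    (∀ i, lstar i = δ * Real.sign (2 * ((∑ j, β j * x j) - y) * β i)) ∧
    ‖lstar‖ ≤ δ ∧
    (y - ∑ i, β i * (x i + lstar i)) ^ 2
      = (|y - ∑ i, β i * x i| + δ * ∑ i, |β i|) ^ 2 ∧
    (y - ∑ i, β i * (x i + lstar i)) ^ 2
      = sSup ((fun l : Fin D → ℝ => (y - ∑ i, β i * (x i + l i)) ^ 2) '' {l | ‖l‖ ≤ δ}) := by
  have h1 : ‖lstar‖ ≤ δ := by
    rw [pi_norm_le_iff_of_nonneg hδ]
    intro i
    rw [hl, Real.norm_eq_abs, abs_mul, abs_mul, abs_of_nonneg hδ, mul_assoc]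
    exact mul_le_of_le_one_right hδ
      (mul_le_one₀ (aux_abs_sign_le _) (abs_nonneg _) (aux_abs_sign_le _))
  have h2 : (y - ∑ i, β i * (x i + lstar i)) ^ 2
      = (|y - ∑ i, β i * x i| + δ * ∑ i, |β i|) ^ 2 := by
    have e : ∑ i, β i * (x i + lstar i) = ∑ i, β i * x i
        + Real.sign ((∑ j, β j * x j) - y) * (δ * ∑ i, |β i|) := by
      rw [Finset.mul_sum, Finset.mul_sum, ← Finset.sum_add_distrib]
      refine Finset.sum_congr rfl fun i _ => ?_
      rw [← aux_mul_sign (β i), hl]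
      ring
    rw [e]
    generalize ∑ i, β i * x i = s at *
    rcases lt_or_gt_of_ne hne with h | h
    · rw [Real.sign_of_neg (by linarith), abs_of_pos (by linarith)]; ring
    · rw [Real.sign_of_pos (by linarith), abs_of_neg (by linarith)]; ring
  refine ⟨fun i => ?_, h1, h2, ?_⟩
  · rw [aux_sign_mul, hl]; exact mul_assoc _ _ _
  · symm
    apply IsGreatest.csSup_eq
    refine ⟨⟨lstar, h1, rfl⟩, ?_⟩
    rintro _ ⟨l, hlδ, rfl⟩
    have hlδ' : ‖l‖ ≤ δ := hlδ
    change (y - ∑ i, β i * (x i + l i)) ^ 2 ≤ _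
    rw [h2, ← sq_abs (y - ∑ i, β i * (x i + l i))]
    refine pow_le_pow_left₀ (abs_nonneg _) ?_ 2
    have e : y - ∑ i, β i * (x i + l i) = (y - ∑ i, β i * x i) - ∑ i, β i * l i := by
      simp only [mul_add, Finset.sum_add_distrib]; ring
    rw [e]
    refine (abs_sub _ _).trans (add_le_add le_rfl ?_)
    refine (Finset.abs_sum_le_sum_abs _ _).trans ?_
    rw [Finset.mul_sum]
    refine Finset.sum_le_sum fun i _ => ?_
    rw [abs_mul, mul_comm]
    exact mul_le_mul_of_nonneg_right ((norm_le_pi_norm l i).trans hlδ') (abs_nonneg _)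
end

section
/- Let β, x ∈ ℝ with β ≠ 0, y ∈ {0,1}, and δ ≥ 0. Define the logistic loss ℓ(u) = −y·log σ(βu) − (1−y)·log(1 − σ(βu)) for u ∈ ℝ, where σ(t) = 1/(1+e^{−t}). Then λ* = δ·(1−2y)·sign(β) satisfies |λ*| ≤ δ and ℓ(x + λ*) ≥ ℓ(x + λ) for every λ ∈ [−δ, δ]; i.e. λ* maximizes the logistic loss over perturbations of size at most δ. -/
/-- The logistic sigmoid `σ(t) = 1/(1+e^{-t})`. -/
noncomputable def sigmoid (t : ℝ) : ℝ := 1 / (1 + Real.exp (-t))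

/-- For logistic regression with coefficient `β ≠ 0`, label `y ∈ {0,1}` and logistic loss
`ℓ(u) = -y log σ(βu) - (1-y) log(1-σ(βu))`, the perturbation
`λ* = δ(1-2y) sign(β)` satisfies `|λ*| ≤ δ` and maximizes `ℓ(x+λ)` over `λ ∈ [-δ, δ]`. -/
theorem logreg_best_pointwise_attack
    (β x y δ : ℝ) (hβ : β ≠ 0) (hy : y = 0 ∨ y = 1) (hδ : 0 ≤ δ)
    (ℓ : ℝ → ℝ)
    (hℓ : ℓ = fun u => -y * Real.log (sigmoid (β * u))
        - (1 - y) * Real.log (1 - sigmoid (β * u))) :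
    |δ * (1 - 2 * y) * Real.sign β| ≤ δ ∧
    ∀ l ∈ Set.Icc (-δ) δ, ℓ (x + l) ≤ ℓ (x + δ * (1 - 2 * y) * Real.sign β) := by
  have key : ∀ a b : ℝ, a ≤ b → Real.log (sigmoid a) ≤ Real.log (sigmoid b) ∧
      Real.log (1 - sigmoid b) ≤ Real.log (1 - sigmoid a) := by
    intro a b hab
    have ea := Real.exp_pos (-a)
    have eb := Real.exp_pos (-b)
    have h : sigmoid a ≤ sigmoid b := by
      unfold sigmoid
      have : Real.exp (-b) ≤ Real.exp (-a) := Real.exp_le_exp.mpr (by linarith)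
      exact one_div_le_one_div_of_le (by linarith) (by linarith)
    have h0 : 0 < sigmoid a := by unfold sigmoid; positivity
    have h1 : sigmoid b < 1 := by
      unfold sigmoid
      rw [div_lt_one (by linarith)]
      linarith
    exact ⟨Real.log_le_log h0 h, Real.log_le_log (by linarith) (by linarith)⟩
  subst hℓ
  rcases lt_or_gt_of_ne hβ with hb | hb
  · rw [Real.sign_of_neg hb]
    rcases hy with rfl | rfl
    · refine ⟨by rw [abs_le]; constructor <;> linarith, ?_⟩
      rintro l ⟨h1, h2⟩
      have := (key (β * (x + l)) (β * (x + δ * (1 - 2 * 0) * -1)) (by nlinarith)).2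
      simp only
      linarith
    · refine ⟨by rw [abs_le]; constructor <;> linarith, ?_⟩
      rintro l ⟨h1, h2⟩
      have := (key (β * (x + δ * (1 - 2 * 1) * -1)) (β * (x + l)) (by nlinarith)).1
      simp only
      linarith
  · rw [Real.sign_of_pos hb]
    rcases hy with rfl | rfl
    · refine ⟨by rw [abs_le]; constructor <;> linarith, ?_⟩
      rintro l ⟨h1, h2⟩
      have := (key (β * (x + l)) (β * (x + δ * (1 - 2 * 0) * 1)) (by nlinarith)).2
      simp only
      linarith
    · refine ⟨by rw [abs_le]; constructor <;> linarith, ?_⟩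
      rintro l ⟨h1, h2⟩
      have := (key (β * (x + δ * (1 - 2 * 1) * 1)) (β * (x + l)) (by nlinarith)).1
      simp only
      linarith
end

section
/- Let D ≥ 1, β, x ∈ ℝ^D, y ∈ {0,1}, and δ ≥ 0. Define the logistic loss ℓ(u) = −y·log σ(β·u) − (1−y)·log(1 − σ(β·u)) for u ∈ ℝ^D, where σ(t) = 1/(1+e^{−t}). Then λ* ∈ ℝ^D defined componentwise by λ*_i = δ·(1−2y)·sign(β_i) satisfies ‖λ*‖∞ ≤ δ and ℓ(x + λ*) ≥ ℓ(x + λ) for every λ ∈ ℝ^D with ‖λ‖∞ ≤ δ; i.e. λ* maximizes the logistic loss over the ℓ∞ ball of radius δ. -/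
theorem sg_mono {s t : ℝ} (h : s ≤ t) : sigmoid s ≤ sigmoid t := by
  unfold sigmoid
  have := Real.exp_pos (-t)
  have h2 : Real.exp (-t) ≤ Real.exp (-s) := Real.exp_le_exp.mpr (by linarith)
  exact one_div_le_one_div_of_le (by linarith) (by linarith)

theorem sg_pos (s : ℝ) : 0 < sigmoid s := by
  unfold sigmoid
  positivity

theorem sg_lt (s : ℝ) : sigmoid s < 1 := by
  unfold sigmoid
  have := Real.exp_pos (-s)
  rw [div_lt_one (by linarith)]
  linarith

theorem sg_abs (b : ℝ) : b * Real.sign b = |b| := by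
  rcases lt_trichotomy b 0 with h | h | h
  · rw [Real.sign_of_neg h, abs_of_neg h]; ring
  · simp [h]
  · rw [Real.sign_of_pos h, abs_of_pos h]; ring

theorem sg_bd (b : ℝ) : |Real.sign b| ≤ 1 := by
  rcases Real.sign_apply_eq b with h | h | h <;> rw [h] <;> norm_num

/-- For multivariate logistic regression with label `y ∈ {0,1}` and logistic loss
`ℓ(u) = -y log σ(β·u) - (1-y) log(1-σ(β·u))`, the perturbation
`λ*_i = δ(1-2y) sign(β_i)` lies in the ℓ∞ ball of radius `δ` and maximizes `ℓ(x+λ)`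
over all `λ` with `‖λ‖∞ ≤ δ`. Here `Fin D → ℝ` carries the sup (ℓ∞) norm. -/
theorem logreg_best_pointwise_attack_multivariate
    (D : ℕ) (hD : 1 ≤ D) (β x : Fin D → ℝ) (y δ : ℝ) (hy : y = 0 ∨ y = 1) (hδ : 0 ≤ δ)
    (ℓ : (Fin D → ℝ) → ℝ)
    (hℓ : ℓ = fun u => -y * Real.log (sigmoid (∑ i, β i * u i))
        - (1 - y) * Real.log (1 - sigmoid (∑ i, β i * u i)))
    (lstar : Fin D → ℝ)
    (hl : lstar = fun i => δ * (1 - 2 * y) * Real.sign (β i)) :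
    ‖lstar‖ ≤ δ ∧
    ∀ l : Fin D → ℝ, ‖l‖ ≤ δ → ℓ (x + l) ≤ ℓ (x + lstar) := by
  have hc : |1 - 2 * y| ≤ 1 := by
    rcases hy with h | h <;> rw [h] <;> norm_num
  constructor
  · rw [pi_norm_le_iff_of_nonneg hδ]
    intro i
    rw [hl]
    simp only [Real.norm_eq_abs, abs_mul, abs_of_nonneg hδ]
    have h1 := sg_bd (β i)
    have h2 : |1 - 2 * y| * |Real.sign (β i)| ≤ 1 := mul_le_one₀ hc (abs_nonneg _) h1
    calc δ * |1 - 2 * y| * |Real.sign (β i)| = δ * (|1 - 2 * y| * |Real.sign (β i)|) := by ring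
      _ ≤ δ * 1 := mul_le_mul_of_nonneg_left h2 hδ
      _ = δ := mul_one δ
  · intro l hn
    have hb : ∀ i, |β i * l i| ≤ δ * |β i| := by
      intro i
      have := (pi_norm_le_iff_of_nonneg hδ).1 hn i
      rw [Real.norm_eq_abs] at this
      rw [abs_mul, mul_comm]
      exact mul_le_mul_of_nonneg_right this (abs_nonneg _)
    subst hℓ hl
    rcases hy with rfl | rfl
    · have key : ∑ i, β i * (x + l) i
          ≤ ∑ i, β i * (x + fun i => δ * (1 - 2 * 0) * Real.sign (β i)) i := by
        apply Finset.sum_le_sum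
        intro i _
        have h1 := (abs_le.1 (hb i)).2
        rw [← sg_abs] at h1
        simp only [Pi.add_apply]
        linarith
      have h3 := Real.log_le_log (sub_pos.2 (sg_lt _)) (sub_le_sub_left (sg_mono key) 1)
      beta_reduce
      linarith
    · have key : ∑ i, β i * (x + fun i => δ * (1 - 2 * 1) * Real.sign (β i)) i
          ≤ ∑ i, β i * (x + l) i := by
        apply Finset.sum_le_sum
        intro i _
        have h1 := (abs_le.1 (hb i)).1
        rw [← sg_abs] at h1
        simp only [Pi.add_apply]
        linarith
      have h3 := Real.log_le_log (sg_pos _) (sg_mono key)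
      beta_reduce
      linarith
end
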